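/- Let k₁, k₂, k₃ be nonnegative integers with k = k₁ + k₂ + k₃. For every p with 2 ≤ p ≤ ∞ there exists a constant C > 0 such that for all t > 0: (i) ‖ ∂_x^{k₁} ∂_y^{k₂} ∂_z^{k₃} G(t, · − x', ·, · − z'; y') ‖_{L^p(ℝ³)} ≤ C e^{−ε t} t^{−(3/4)(1 − 1/p) − k/4} (1 + (A t)⁴)^{−(1/4)(1 − 1/p) − k₁/4}, uniformly in (x', y', z') (the L^p norm and the derivatives are in the unprimed variables (x, y, z)); and (ii) ‖ ∂_x^{k₁} ∂_y^{k₂} ∂_z^{k₃} G(t, x − ·, y, z − ·; ·) ‖_{L^p(ℝ³)} ≤ C e^{−ε t} t^{−(3/4)(1 − 1/p) − k/4} (1 + (A t)⁴)^{−(1/4)(1 − 1/p) − k₁/4}, uniformly in (x, y, z) (the derivatives are in (x, y, z), the L^p norm is in the primed variables). -/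

import Mathlib

/-!
The integrand of `G` is a phase times `Ĝ₂`, so `∂_x^{k₁} ∂_y^{k₂} ∂_z^{k₃} G` is, up to modulus-one
factors, the Fourier integral of `|ξ|^{k₁} |η|^{k₂} |ζ|^{k₃} Ĝ₂` (`pD_GreenG`).

Since `κ - ε > 1/16 = max (v - 4v²)`, one has `v - κ - 4v² ≤ -ε - c v²` for some `c > 0`. Moreover
`∫₀ᵗ v² ds` dominates `t (ξ⁴ (1 + (At)⁴) + η⁴ + ζ⁴)` up to a constant, because the mean of the fourth
power of the affine function `η + Aξs` on `[0, t]` controls `η⁴ + (Aξt)⁴`. Hence (`Ghat2_le`) `Ĝ₂` is at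
most `e^{-εt}` times a product of one-dimensional quartic exponentials, whose moments are computed
by scaling (`quartic_integral`). With `D = e^{-εt} t^{-k/4} (1+(At)⁴)^{-k₁/4}` and
`B = t^{-3/4} (1+(At)⁴)^{-1/4}`, the amplitude has `L¹` norm at most `C D B` and squared `L²` norm at
most `C D² B` (`core`).

The `L¹` bound gives the `L^∞` estimate of the Fourier integral, the `L²` bound gives its `L²`
estimate through the Plancherel inequality (`plancherel_le`), and interpolation (`interp`) gives
`C D B^{1-1/p}`, which is the asserted bound.

In the primed variables the phase is `x'ξ + y'(η + Aξt) + z'ζ`. The measure-preserving substitution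
`shear` turns the derivative of `G` into a Fourier integral in `(x', y', z')` of an amplitude with the
same `L¹` and `L²` norms (`TF_primed`), so the same argument applies.
-/

open MeasureTheory
open scoped ENNReal

/-- The symbol `v(s; ξ, η, ζ) = ξ² + (η + A ξ s)² + ζ²`. -/
noncomputable def vA (A ξ η ζ s : ℝ) : ℝ := ξ ^ 2 + (η + A * ξ * s) ^ 2 + ζ ^ 2

/-- The spectral Green's function `Ĝ₂`. -/
noncomputable def Ghat2 (A κ t ξ η ζ : ℝ) : ℝ :=
  Real.exp (∫ s in (0:ℝ)..t, (vA A ξ η ζ s - κ - 4 * vA A ξ η ζ s ^ 2))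

/-- The Green's function `G(t, x - x', y, z - z'; y')` of the linearized equation. -/
noncomputable def GreenG (A κ t x y z x' y' z' : ℝ) : ℂ :=
  ∫ q : ℝ × ℝ × ℝ,
    Complex.exp (Complex.I * ((x * q.1 + y * q.2.1 + z * q.2.2 : ℝ) : ℂ)) *
      Complex.exp (-Complex.I *
        ((x' * q.1 + y' * (q.2.1 + A * q.1 * t) + z' * q.2.2 : ℝ) : ℂ)) *
      (Ghat2 A κ t q.1 q.2.1 q.2.2 : ℂ)

/-- Partial derivative in the first coordinate of `ℝ³ = ℝ × ℝ × ℝ`. -/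
noncomputable def pdx {E : Type*} [NormedAddCommGroup E] [NormedSpace ℝ E]
    (f : ℝ × ℝ × ℝ → E) : ℝ × ℝ × ℝ → E :=
  fun p => deriv (fun u => f (u, p.2.1, p.2.2)) p.1

/-- Partial derivative in the second coordinate. -/
noncomputable def pdy {E : Type*} [NormedAddCommGroup E] [NormedSpace ℝ E]
    (f : ℝ × ℝ × ℝ → E) : ℝ × ℝ × ℝ → E :=
  fun p => deriv (fun u => f (p.1, u, p.2.2)) p.2.1

/-- Partial derivative in the third coordinate. -/
noncomputable def pdz {E : Type*} [NormedAddCommGroup E] [NormedSpace ℝ E]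
    (f : ℝ × ℝ × ℝ → E) : ℝ × ℝ × ℝ → E :=
  fun p => deriv (fun u => f (p.1, p.2.1, u)) p.2.2

/-- The mixed partial derivative `∂_x^{k₁} ∂_y^{k₂} ∂_z^{k₃}`. -/
noncomputable def pD {E : Type*} [NormedAddCommGroup E] [NormedSpace ℝ E]
    (k₁ k₂ k₃ : ℕ) (f : ℝ × ℝ × ℝ → E) : ℝ × ℝ × ℝ → E :=
  pdx^[k₁] (pdy^[k₂] (pdz^[k₃] f))

/-! ### The oscillatory integral on `ℝ × ℝ × ℝ` -/

instance addHaar2 : (volume : Measure (ℝ × ℝ)).IsAddHaarMeasure :=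
  inferInstanceAs (((volume : Measure ℝ).prod (volume : Measure ℝ)).IsAddHaarMeasure)

instance addHaar3 : (volume : Measure (ℝ × ℝ × ℝ)).IsAddHaarMeasure :=
  inferInstanceAs
    (((volume : Measure ℝ).prod (volume : Measure (ℝ × ℝ))).IsAddHaarMeasure)

/-- The character `e^{i p·q}` of `ℝ³ = ℝ × ℝ × ℝ` (the product type carries no inner product). -/
noncomputable def chi (p q : ℝ × ℝ × ℝ) : ℂ :=
  Complex.exp (Complex.I * ((p.1 * q.1 + p.2.1 * q.2.1 + p.2.2 * q.2.2 : ℝ) : ℂ))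

/-- The unnormalized Fourier integral `p ↦ ∫ e^{i p·q} F(q) dq`. -/
noncomputable def TF (F : ℝ × ℝ × ℝ → ℂ) (p : ℝ × ℝ × ℝ) : ℂ := ∫ q, chi p q * F q

lemma chi_norm (p q : ℝ × ℝ × ℝ) : ‖chi p q‖ = 1 := by
  rw [chi, mul_comm]
  exact Complex.norm_exp_ofReal_mul_I _

lemma chi_cont : Continuous fun z : (ℝ × ℝ × ℝ) × (ℝ × ℝ × ℝ) => chi z.1 z.2 := by
  unfold chi
  fun_prop

lemma chi_cont_right (p : ℝ × ℝ × ℝ) : Continuous (chi p) := by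
  unfold chi
  fun_prop

lemma chi_cont_left (q : ℝ × ℝ × ℝ) : Continuous fun p => chi p q := by
  unfold chi
  fun_prop

lemma chi_comm (p q : ℝ × ℝ × ℝ) : chi p q = chi q p := by
  unfold chi
  congr 3
  ring

lemma chi_add (p q r : ℝ × ℝ × ℝ) : chi p q * chi p r = chi p (q + r) := by
  unfold chi
  rw [← Complex.exp_add]
  congr 1
  simp only [Prod.fst_add, Prod.snd_add]
  push_cast
  ring

lemma chi_conj (p q : ℝ × ℝ × ℝ) : (starRingEnd ℂ) (chi p q) = chi p (-q) := by
  unfold chi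
  rw [← Complex.exp_conj]
  congr 1
  simp only [map_mul, Complex.conj_I, Complex.conj_ofReal, Prod.fst_neg, Prod.snd_neg]
  push_cast
  ring

lemma chi_mul_integrable {F : ℝ × ℝ × ℝ → ℂ} (hF : Integrable F) (p : ℝ × ℝ × ℝ) :
    Integrable fun q => chi p q * F q :=
  hF.bdd_mul (c := 1) (chi_cont_right p).aestronglyMeasurable
    (Filter.Eventually.of_forall fun q => (chi_norm p q).le)

lemma TF_norm_le (F : ℝ × ℝ × ℝ → ℂ) (p : ℝ × ℝ × ℝ) : ‖TF F p‖ ≤ ∫ q, ‖F q‖ := by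
  refine (norm_integral_le_integral_norm _).trans_eq ?_
  simp [chi_norm]

lemma TF_cont {F : ℝ × ℝ × ℝ → ℂ} (hF : Integrable F) : Continuous (TF F) := by
  refine continuous_of_dominated (bound := fun q => ‖F q‖)
    (fun p => (chi_mul_integrable hF p).aestronglyMeasurable) ?_ hF.norm ?_
  · intro p
    refine Filter.Eventually.of_forall fun q => ?_
    simp [chi_norm]
  · refine Filter.Eventually.of_forall fun q => ?_
    exact (chi_cont_left q).mul continuous_const

/-- Multiplication formula `∫ F̂ h = ∫ F ĥ`. -/
lemma TF_duality {F h : ℝ × ℝ × ℝ → ℂ} (hF : Integrable F) (hh : Integrable h) :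
    ∫ p, TF F p * h p = ∫ q, F q * TF h q := by
  have h1 : Integrable (Function.uncurry fun p q : ℝ × ℝ × ℝ => chi p q * (h p * F q))
      (volume.prod volume) := by
    refine (hh.mul_prod hF).bdd_mul (c := 1) chi_cont.aestronglyMeasurable
      (Filter.Eventually.of_forall fun q => (chi_norm _ _).le)
  have h2 := integral_integral_swap h1
  calc ∫ p, TF F p * h p = ∫ p, ∫ q, chi p q * (h p * F q) := by
        congr 1; ext p
        rw [TF, ← integral_mul_const]
        congr 1; ext q
        ring
    _ = ∫ q, ∫ p, chi p q * (h p * F q) := h2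
    _ = _ := by
        congr 1; ext q
        rw [TF, ← integral_const_mul]
        congr 1; ext p
        rw [chi_comm]
        ring

/-! ### Plancherel inequality -/

/-- The Gaussian weight `e^{-δ|p|²}`. -/
noncomputable def gw (δ : ℝ) (p : ℝ × ℝ × ℝ) : ℝ :=
  Real.exp (-δ * p.1 ^ 2) * (Real.exp (-δ * p.2.1 ^ 2) * Real.exp (-δ * p.2.2 ^ 2))

/-- The Fourier transform of the one-dimensional Gaussian `e^{-δu²}`. -/
noncomputable def gh (δ x : ℝ) : ℝ := √(Real.pi / δ) * Real.exp (-(1 / (4 * δ)) * x ^ 2)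

lemma gw_integrable {δ : ℝ} (hδ : 0 < δ) : Integrable (gw δ) := by
  have h := integrable_exp_neg_mul_sq hδ
  exact h.mul_prod (h.mul_prod h)

lemma gh_fourier {δ : ℝ} (hδ : 0 < δ) (x : ℝ) :
    ∫ u : ℝ, Complex.exp (Complex.I * ((u * x : ℝ) : ℂ)) * ((Real.exp (-δ * u ^ 2) : ℝ) : ℂ)
      = (gh δ x : ℂ) := by
  have h := fourierIntegral_gaussian (b := (δ : ℂ)) (by simpa using hδ) (x : ℂ)
  have e : ((Real.pi : ℂ) / δ) ^ (1 / 2 : ℂ) = ((√(Real.pi / δ) : ℝ) : ℂ) := by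
    rw [Real.sqrt_eq_rpow, Complex.ofReal_cpow (by positivity)]
    push_cast
    rfl
  rw [e] at h
  convert h using 1
  · congr 1; ext u
    push_cast
    congr 2
    ring
  · rw [gh]
    push_cast
    congr 2
    have : (δ : ℂ) ≠ 0 := by exact_mod_cast hδ.ne'
    field_simp

/-- The Fourier transform of the Gaussian weight on `ℝ³`. -/
noncomputable def gW (δ : ℝ) (p : ℝ × ℝ × ℝ) : ℝ := gh δ p.1 * (gh δ p.2.1 * gh δ p.2.2)

lemma gh_nonneg (δ x : ℝ) : 0 ≤ gh δ x := by unfold gh; positivity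

lemma gW_nonneg (δ : ℝ) (p : ℝ × ℝ × ℝ) : 0 ≤ gW δ p :=
  mul_nonneg (gh_nonneg _ _) (mul_nonneg (gh_nonneg _ _) (gh_nonneg _ _))

lemma TF_gw {δ : ℝ} (hδ : 0 < δ) (q : ℝ × ℝ × ℝ) :
    TF (fun p => (gw δ p : ℂ)) q = gW δ q := by
  unfold TF gW
  push_cast
  simp only [← gh_fourier hδ]
  erw [← integral_prod_mul (μ := (volume : Measure ℝ)) (ν := (volume : Measure ℝ)),
    ← integral_prod_mul (μ := (volume : Measure ℝ)) (ν := (volume : Measure (ℝ × ℝ)))]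
  congr 1; ext p
  simp only [chi, gw]
  push_cast
  rw [mul_add, mul_add, Complex.exp_add, Complex.exp_add]
  rw [mul_comm (q.1 : ℂ), mul_comm (q.2.1 : ℂ), mul_comm (q.2.2 : ℂ)]
  ring

lemma gh_integrable {δ : ℝ} (hδ : 0 < δ) : Integrable (gh δ) :=
  (integrable_exp_neg_mul_sq (by positivity)).const_mul _

lemma gh_integral {δ : ℝ} (hδ : 0 < δ) : ∫ x, gh δ x = 2 * Real.pi := by
  unfold gh
  rw [integral_const_mul, integral_gaussian, ← Real.sqrt_mul (by positivity)]
  rw [Real.sqrt_eq_iff_mul_self_eq (by positivity) (by positivity)]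
  field_simp
  norm_num

lemma gW_integrable {δ : ℝ} (hδ : 0 < δ) : Integrable (gW δ) :=
  (gh_integrable hδ).mul_prod ((gh_integrable hδ).mul_prod (gh_integrable hδ))

/-- The total mass of `gW δ` does not depend on `δ`. -/
lemma gW_integral {δ : ℝ} (hδ : 0 < δ) : ∫ x, gW δ x = (2 * Real.pi) ^ 3 := by
  unfold gW
  erw [integral_prod_mul (μ := (volume : Measure ℝ)) (ν := (volume : Measure (ℝ × ℝ))) (gh δ)
    (fun x : ℝ × ℝ => gh δ x.1 * gh δ x.2),
    integral_prod_mul (μ := (volume : Measure ℝ)) (ν := (volume : Measure ℝ))]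
  rw [gh_integral hδ]
  ring

lemma gW_cont (δ : ℝ) : Continuous (gW δ) := by
  unfold gW gh
  fun_prop

lemma gw_cont (δ : ℝ) : Continuous (gw δ) := by
  unfold gw
  fun_prop

/-- Schur test for the convolution kernel `gW δ (q + r)`. -/
lemma schur {δ : ℝ} (hδ : 0 < δ) {F : ℝ × ℝ × ℝ → ℂ} (hF : Integrable F) :
    ∫⁻ q, ∫⁻ r, ‖F q‖ₑ * ‖F (-r)‖ₑ * ENNReal.ofReal (gW δ (q + r))
      ≤ ENNReal.ofReal ((2 * Real.pi) ^ 3) * ∫⁻ q, ‖F q‖ₑ ^ 2 := by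
  set K : ℝ≥0∞ := ENNReal.ofReal ((2 * Real.pi) ^ 3)
  set w : ℝ × ℝ × ℝ → ℝ≥0∞ := fun q => ENNReal.ofReal (gW δ q) with hw
  have hwm : Measurable w := (gW_cont δ).measurable.ennreal_ofReal
  have hK : ∫⁻ q, w q = K := by
    rw [show K = ENNReal.ofReal (∫ x, gW δ x) by rw [gW_integral hδ],
      ofReal_integral_eq_lintegral_ofReal (gW_integrable hδ)
      (Filter.Eventually.of_forall (gW_nonneg δ))]
  have hFm : AEMeasurable (fun q => ‖F q‖ₑ ^ 2) := (hF.aestronglyMeasurable.enorm).pow_const 2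
  have hFn : AEMeasurable (fun q => ‖F (-q)‖ₑ ^ 2) :=
    hFm.comp_quasiMeasurePreserving
      (Measure.measurePreserving_neg (volume : Measure (ℝ × ℝ × ℝ))).quasiMeasurePreserving
  have am : ∀ a b : ℝ≥0∞, a * b ≤ 2⁻¹ * (a ^ 2 + b ^ 2) := by
    intro a b
    rcases eq_or_ne a ⊤ with rfl | ha
    · simp [ENNReal.mul_top]
    rcases eq_or_ne b ⊤ with rfl | hb
    · simp [ENNReal.mul_top]
    lift a to NNReal using ha
    lift b to NNReal using hb
    have e : (2⁻¹ : ℝ≥0∞) = ((2⁻¹ : NNReal) : ℝ≥0∞) := by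
      rw [ENNReal.coe_inv (by norm_num)]; rfl
    rw [e]
    norm_cast
    rw [← NNReal.coe_le_coe]
    push_cast
    nlinarith [sq_nonneg ((a : ℝ) - b)]
  have e1 : ∫⁻ q, ∫⁻ r, ‖F q‖ₑ ^ 2 * w (q + r) = K * ∫⁻ q, ‖F q‖ₑ ^ 2 := by
    have : ∀ q, ∫⁻ r, ‖F q‖ₑ ^ 2 * w (q + r) = K * ‖F q‖ₑ ^ 2 := by
      intro q
      rw [lintegral_const_mul _ (by fun_prop), lintegral_add_left_eq_self, hK, mul_comm]
    simp_rw [this]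
    rw [lintegral_const_mul'' _ hFm]
  have e2 : ∫⁻ q, ∫⁻ r, ‖F (-r)‖ₑ ^ 2 * w (q + r) = K * ∫⁻ q, ‖F q‖ₑ ^ 2 := by
    rw [lintegral_lintegral_swap]
    · have : ∀ r, ∫⁻ q, ‖F (-r)‖ₑ ^ 2 * w (q + r) = K * ‖F (-r)‖ₑ ^ 2 := by
        intro q
        rw [lintegral_const_mul _ (by fun_prop), lintegral_add_right_eq_self, hK, mul_comm]
      simp_rw [this]
      rw [lintegral_const_mul'' _ hFn,
        lintegral_neg_eq_self (μ := volume) (fun q => ‖F q‖ₑ ^ 2)]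
    · exact (hFn.comp_snd).mul (by fun_prop : Measurable fun z : (ℝ × ℝ × ℝ) × (ℝ × ℝ × ℝ) =>
        w (z.1 + z.2)).aemeasurable
  calc _ ≤ ∫⁻ q, ∫⁻ r, 2⁻¹ * (‖F q‖ₑ ^ 2 * w (q + r) + ‖F (-r)‖ₑ ^ 2 * w (q + r)) := by
        refine lintegral_mono fun q => lintegral_mono fun r => ?_
        show _ * w (q + r) ≤ _
        rw [← add_mul, ← mul_assoc]
        exact mul_le_mul_left (am _ _) _
    _ = 2⁻¹ * (K * (∫⁻ q, ‖F q‖ₑ ^ 2) + K * ∫⁻ q, ‖F q‖ₑ ^ 2) := by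
        have c2 : (2⁻¹ : ℝ≥0∞) ≠ ⊤ := by simp
        simp_rw [lintegral_const_mul' _ _ c2]
        have : ∀ q, ∫⁻ r, (‖F q‖ₑ ^ 2 * w (q + r) + ‖F (-r)‖ₑ ^ 2 * w (q + r)) =
            (∫⁻ r, ‖F q‖ₑ ^ 2 * w (q + r)) + ∫⁻ r, ‖F (-r)‖ₑ ^ 2 * w (q + r) := fun q =>
          lintegral_add_left (by fun_prop) _
        simp_rw [this]
        rw [lintegral_add_left', e1, e2]
        have : ∀ q, ∫⁻ r, ‖F q‖ₑ ^ 2 * w (q + r) = K * ‖F q‖ₑ ^ 2 := by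
          intro q
          rw [lintegral_const_mul _ (by fun_prop), lintegral_add_left_eq_self, hK, mul_comm]
        simp_rw [this]
        exact hFm.const_mul _
    _ = _ := by
        rw [← two_mul, ← mul_assoc, ENNReal.inv_mul_cancel (by simp) (by simp), one_mul]

/-- `∫ |F̂|² e^{-δ|p|²} dp` as a quadratic form in `F`, by two uses of the multiplication formula. -/
lemma weighted_identity {δ : ℝ} (hδ : 0 < δ) {F : ℝ × ℝ × ℝ → ℂ} (hF : Integrable F) :
    ∫ p, TF F p * ((starRingEnd ℂ) (TF F p) * (gw δ p : ℂ)) =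
      ∫ q, F q * ∫ r, (starRingEnd ℂ) (F (-r)) * (gW δ (q + r) : ℂ) := by
  set Fc : ℝ × ℝ × ℝ → ℂ := fun r => (starRingEnd ℂ) (F (-r)) with hFc
  have hFci : Integrable Fc := by
    have h1 : Integrable fun r => F (-r) := hF.comp_neg
    exact (Complex.conjLIE.toContinuousLinearEquiv.toContinuousLinearMap).integrable_comp h1
  have hconj : ∀ p, (starRingEnd ℂ) (TF F p) = TF Fc p := by
    intro p
    rw [TF, ← integral_conj, TF, ← integral_neg_eq_self]
    congr 1; ext r
    rw [map_mul, chi_conj, neg_neg]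
  have hg : Integrable fun p => (gw δ p : ℂ) := (gw_integrable hδ).ofReal
  have hh : Integrable fun p => TF Fc p * (gw δ p : ℂ) :=
    hg.bdd_mul (TF_cont hFci).aestronglyMeasurable
      (Filter.Eventually.of_forall fun p => TF_norm_le Fc p)
  simp_rw [hconj]
  rw [TF_duality hF hh]
  congr 1; ext q
  congr 1
  calc TF (fun p => TF Fc p * (gw δ p : ℂ)) q = ∫ p, TF Fc p * (chi q p * (gw δ p : ℂ)) := by
        unfold TF
        congr 1; ext p
        ring
    _ = ∫ r, Fc r * TF (fun p => chi q p * (gw δ p : ℂ)) r :=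
        TF_duality hFci (chi_mul_integrable hg q)
    _ = _ := by
        congr 1; ext r
        congr 1
        rw [← TF_gw hδ (q + r)]
        unfold TF
        congr 1; ext p
        show chi r p * (chi q p * _) = chi (q + r) p * _
        rw [chi_comm r, chi_comm q, chi_comm (q + r), ← mul_assoc, chi_add, add_comm]

/-- Half of Plancherel's theorem, obtained by testing against a Gaussian weight `e^{-δ|p|²}`,
bounding the resulting quadratic form uniformly in `δ`, and letting `δ → 0`. -/
lemma plancherel_le {F : ℝ × ℝ × ℝ → ℂ} (hF : Integrable F) :
    ∫⁻ p, ‖TF F p‖ₑ ^ 2 ≤ ENNReal.ofReal ((2 * Real.pi) ^ 3) * ∫⁻ q, ‖F q‖ₑ ^ 2 := by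
  have key : ∀ δ : ℝ, 0 < δ → ∫⁻ p, ‖TF F p‖ₑ ^ 2 * ENNReal.ofReal (gw δ p) ≤
      ENNReal.ofReal ((2 * Real.pi) ^ 3) * ∫⁻ q, ‖F q‖ₑ ^ 2 := by
    intro δ hδ
    refine le_trans ?_ (schur hδ hF)
    have h0 : ∀ p, 0 ≤ gw δ p := fun p => by unfold gw; positivity
    have hi : Integrable fun p => ‖TF F p‖ ^ 2 * gw δ p := by
      refine (gw_integrable hδ).bdd_mul (c := (∫ q, ‖F q‖) ^ 2)
        ((TF_cont hF).norm.pow 2).aestronglyMeasurable (Filter.Eventually.of_forall fun p => ?_)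
      rw [Real.norm_of_nonneg (by positivity)]
      gcongr
      exact TF_norm_le F p
    have e1 : ∫⁻ p, ‖TF F p‖ₑ ^ 2 * ENNReal.ofReal (gw δ p)
        = ENNReal.ofReal (∫ p, ‖TF F p‖ ^ 2 * gw δ p) := by
      rw [ofReal_integral_eq_lintegral_ofReal hi
        (Filter.Eventually.of_forall fun p => mul_nonneg (by positivity) (h0 p))]
      refine lintegral_congr fun p => ?_
      rw [ENNReal.ofReal_mul (by positivity), ENNReal.ofReal_pow (norm_nonneg _), ofReal_norm]
    have e2 : ((∫ p, ‖TF F p‖ ^ 2 * gw δ p : ℝ) : ℂ) =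
        ∫ p, TF F p * ((starRingEnd ℂ) (TF F p) * (gw δ p : ℂ)) := by
      rw [← integral_complex_ofReal]
      congr 1; ext p
      rw [← mul_assoc, Complex.mul_conj, Complex.normSq_eq_norm_sq]
      push_cast
      rfl
    have e3 : ENNReal.ofReal (∫ p, ‖TF F p‖ ^ 2 * gw δ p) =
        ‖((∫ p, ‖TF F p‖ ^ 2 * gw δ p : ℝ) : ℂ)‖ₑ := by
      rw [← ofReal_norm, Complex.norm_real, Real.norm_of_nonneg]
      exact integral_nonneg fun p => mul_nonneg (by positivity) (h0 p)
    rw [e1, e3, e2, weighted_identity hδ hF]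
    refine (enorm_integral_le_lintegral_enorm _).trans (lintegral_mono fun q => ?_)
    rw [enorm_mul]
    refine (mul_le_mul_right (enorm_integral_le_lintegral_enorm _) _).trans ?_
    rw [← lintegral_const_mul' _ _ enorm_ne_top]
    refine lintegral_mono fun r => ?_
    rw [enorm_mul, ← mul_assoc, RCLike.enorm_conj]
    gcongr
    rw [← ofReal_norm, Complex.norm_real, Real.norm_of_nonneg (gW_nonneg _ _)]
  have hlim : ∀ p, Filter.Tendsto
      (fun n : ℕ => ‖TF F p‖ₑ ^ 2 * ENNReal.ofReal (gw (1 / ((n : ℝ) + 1)) p)) Filter.atTop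
      (nhds (‖TF F p‖ₑ ^ 2)) := by
    intro p
    have h1 : Filter.Tendsto (fun n : ℕ => gw (1 / ((n : ℝ) + 1)) p) Filter.atTop (nhds 1) := by
      have hc : Continuous fun δ => gw δ p := by unfold gw; fun_prop
      have := (hc.tendsto 0).comp tendsto_one_div_add_atTop_nhds_zero_nat
      simpa [gw, Function.comp_def] using this
    have h2 := ENNReal.Tendsto.const_mul (a := ‖TF F p‖ₑ ^ 2) (ENNReal.tendsto_ofReal h1)
      (Or.inl (by simp))
    simpa using h2
  calc ∫⁻ p, ‖TF F p‖ₑ ^ 2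
      = ∫⁻ p, Filter.liminf (fun n : ℕ =>
          ‖TF F p‖ₑ ^ 2 * ENNReal.ofReal (gw (1 / ((n : ℝ) + 1)) p)) Filter.atTop :=
        lintegral_congr fun p => (hlim p).liminf_eq.symm
    _ ≤ Filter.liminf (fun n : ℕ => ∫⁻ p,
          ‖TF F p‖ₑ ^ 2 * ENNReal.ofReal (gw (1 / ((n : ℝ) + 1)) p)) Filter.atTop := by
        refine lintegral_liminf_le' fun n => ?_
        exact (((TF_cont hF).measurable.enorm.pow_const 2).mul
          (gw_cont _).measurable.ennreal_ofReal).aemeasurable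
    _ ≤ _ := by
        refine Filter.liminf_le_of_le (by isBoundedDefault) fun b hb => ?_
        obtain ⟨n, hn⟩ := hb.exists
        exact hn.trans (key _ (by positivity))

/-! ### Differentiation under the integral sign -/

/-- Differentiation of `TF F` along a curve `P` whose velocity pairs with `q` to `c q`. -/
lemma TF_hasDerivAt {F : ℝ × ℝ × ℝ → ℂ} (c : ℝ × ℝ × ℝ → ℝ) (P : ℝ → ℝ × ℝ × ℝ)
    (hP : ∀ u q, HasDerivAt (fun u => chi (P u) q) (chi (P u) q * (Complex.I * c q)) u)
    (hF : Integrable F) (hcF : Integrable fun q => Complex.I * (c q : ℂ) * F q) (u : ℝ) :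
    HasDerivAt (fun u => TF F (P u)) (TF (fun q => Complex.I * (c q : ℂ) * F q) (P u)) u := by
  refine (hasDerivAt_integral_of_dominated_loc_of_deriv_le (𝕜 := ℝ)
    (F := fun u q => chi (P u) q * F q)
    (F' := fun u q => chi (P u) q * (Complex.I * (c q : ℂ) * F q))
    (bound := fun q => ‖Complex.I * (c q : ℂ) * F q‖) Filter.univ_mem
    (Filter.Eventually.of_forall fun u => (chi_mul_integrable hF (P u)).aestronglyMeasurable)
    (chi_mul_integrable hF (P u)) (chi_mul_integrable hcF (P u)).aestronglyMeasurable ?_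
    hcF.norm ?_).2
  · refine Filter.Eventually.of_forall fun q u _ => ?_
    rw [norm_mul, chi_norm, one_mul]
  · refine Filter.Eventually.of_forall fun q u _ => ?_
    have := (hP u q).mul_const (F q)
    rwa [mul_assoc] at this

lemma chi_hasDerivAt (c d q : ℝ × ℝ × ℝ) (u : ℝ) (P : ℝ → ℝ × ℝ × ℝ)
    (hP : ∀ u, P u = (c.1 + u * d.1, c.2.1 + u * d.2.1, c.2.2 + u * d.2.2)) :
    HasDerivAt (fun u => chi (P u) q)
      (chi (P u) q *
        (Complex.I * ((d.1 * q.1 + d.2.1 * q.2.1 + d.2.2 * q.2.2 : ℝ) : ℂ))) u := by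
  simp_rw [hP]
  unfold chi
  refine HasDerivAt.cexp (HasDerivAt.const_mul _ ?_)
  refine HasDerivAt.ofReal_comp ?_
  have h : ∀ a b : ℝ, HasDerivAt (fun u : ℝ => a + u * b) b u := fun a b => by
    simpa using ((hasDerivAt_id u).mul_const b).const_add a
  exact (((h _ _).mul_const _).add ((h _ _).mul_const _)).add ((h _ _).mul_const _)

lemma pdx_TF {F : ℝ × ℝ × ℝ → ℂ} (hF : Integrable F)
    (hcF : Integrable fun q => Complex.I * (q.1 : ℂ) * F q) :
    pdx (TF F) = TF fun q => Complex.I * (q.1 : ℂ) * F q := by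
  ext p
  refine (TF_hasDerivAt (fun q => q.1) (fun u => (u, p.2.1, p.2.2)) (fun u q => ?_) hF hcF
    p.1).deriv
  simpa using chi_hasDerivAt (0, p.2.1, p.2.2) (1, 0, 0) q u (fun u => (u, p.2.1, p.2.2))
    (by simp)

lemma pdy_TF {F : ℝ × ℝ × ℝ → ℂ} (hF : Integrable F)
    (hcF : Integrable fun q => Complex.I * (q.2.1 : ℂ) * F q) :
    pdy (TF F) = TF fun q => Complex.I * (q.2.1 : ℂ) * F q := by
  ext p
  refine (TF_hasDerivAt (fun q => q.2.1) (fun u => (p.1, u, p.2.2)) (fun u q => ?_) hF hcF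
    p.2.1).deriv
  simpa using chi_hasDerivAt (p.1, 0, p.2.2) (0, 1, 0) q u (fun u => (p.1, u, p.2.2))
    (by simp)

lemma pdz_TF {F : ℝ × ℝ × ℝ → ℂ} (hF : Integrable F)
    (hcF : Integrable fun q => Complex.I * (q.2.2 : ℂ) * F q) :
    pdz (TF F) = TF fun q => Complex.I * (q.2.2 : ℂ) * F q := by
  ext p
  refine (TF_hasDerivAt (fun q => q.2.2) (fun u => (p.1, p.2.1, u)) (fun u q => ?_) hF hcF
    p.2.2).deriv
  simpa using chi_hasDerivAt (p.1, p.2.1, 0) (0, 0, 1) q u (fun u => (p.1, p.2.1, u))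
    (by simp)

/-- Iterating a single partial derivative `pd` that acts on Fourier integrals as multiplication
by `m`. -/
lemma iterate_TF (pd : (ℝ × ℝ × ℝ → ℂ) → ℝ × ℝ × ℝ → ℂ) (m : ℝ × ℝ × ℝ → ℂ)
    (hpd : ∀ F : ℝ × ℝ × ℝ → ℂ, Integrable F → Integrable (fun q => m q * F q) →
      pd (TF F) = TF fun q => m q * F q)
    {F : ℝ × ℝ × ℝ → ℂ} (hF : ∀ j : ℕ, Integrable fun q => m q ^ j * F q) (k : ℕ) :
    pd^[k] (TF F) = TF fun q => m q ^ k * F q := by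
  induction k with
  | zero => simp
  | succ k ih =>
    have e : (fun q => m q * (m q ^ k * F q)) = fun q => m q ^ (k + 1) * F q := by
      ext q; ring
    rw [Function.iterate_succ_apply', ih, hpd _ (hF k) (by rw [e]; exact hF (k + 1)), e]

/-- The symbol of `∂_x^{k₁} ∂_y^{k₂} ∂_z^{k₃}`. -/
noncomputable def mon (k₁ k₂ k₃ : ℕ) (q : ℝ × ℝ × ℝ) : ℂ :=
  (Complex.I * (q.1 : ℂ)) ^ k₁ * ((Complex.I * (q.2.1 : ℂ)) ^ k₂ * (Complex.I * (q.2.2 : ℂ)) ^ k₃)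

lemma mon_cont (k₁ k₂ k₃ : ℕ) : Continuous (mon k₁ k₂ k₃) := by
  unfold mon
  fun_prop

lemma mon_norm (k₁ k₂ k₃ : ℕ) (q : ℝ × ℝ × ℝ) :
    ‖mon k₁ k₂ k₃ q‖ = |q.1| ^ k₁ * (|q.2.1| ^ k₂ * |q.2.2| ^ k₃) := by
  simp [mon]

lemma pD_TF {F : ℝ × ℝ × ℝ → ℂ}
    (hF : ∀ a b c : ℕ, Integrable fun q => mon a b c q * F q) (k₁ k₂ k₃ : ℕ) :
    pD k₁ k₂ k₃ (TF F) = TF fun q => mon k₁ k₂ k₃ q * F q := by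
  unfold pD
  rw [iterate_TF pdz (fun q => Complex.I * (q.2.2 : ℂ)) (fun F h1 h2 => pdz_TF h1 h2)
      (fun j => by simpa [mon] using hF 0 0 j),
    iterate_TF pdy (fun q => Complex.I * (q.2.1 : ℂ)) (fun F h1 h2 => pdy_TF h1 h2)
      (fun j => by simpa [mon, mul_assoc] using hF 0 j k₃),
    iterate_TF pdx (fun q => Complex.I * (q.1 : ℂ)) (fun F h1 h2 => pdx_TF h1 h2)
      (fun j => by simpa [mon, mul_assoc] using hF j k₂ k₃)]
  congr 1; ext q
  simp only [mon, mul_assoc]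

/-! ### Moments of quartic exponentials -/

/-- The moment `∫ |u|^k e^{-u⁴} du`. -/
noncomputable def Jm (k : ℕ) : ℝ := ∫ u : ℝ, |u| ^ k * Real.exp (-u ^ 4)

lemma Jm_nonneg (k : ℕ) : 0 ≤ Jm k := integral_nonneg fun u => by positivity

lemma quartic_integrable_one (k : ℕ) :
    Integrable fun u : ℝ => |u| ^ k * Real.exp (-u ^ 4) := by
  have h := (integrable_rpow_mul_exp_neg_mul_sq (b := 1) one_pos
    (s := (k : ℝ)) (by have := Nat.cast_nonneg (α := ℝ) k; linarith)).norm.const_mul (Real.exp 1)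
  refine h.mono' (by fun_prop) (Filter.Eventually.of_forall fun u => ?_)
  rw [Real.rpow_natCast, norm_mul, norm_mul, norm_pow, Real.norm_eq_abs, abs_abs, norm_pow,
    Real.norm_eq_abs, Real.norm_eq_abs, Real.norm_eq_abs, abs_of_pos (Real.exp_pos _),
    abs_of_pos (Real.exp_pos _), mul_left_comm, ← Real.exp_add]
  gcongr
  nlinarith [sq_nonneg (u ^ 2 - 1 / 2)]

lemma quartic_scale (k : ℕ) {b : ℝ} (hb : 0 < b) (u : ℝ) :
    |u| ^ k * Real.exp (-b * u ^ 4) =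
      (b ^ (1 / 4 : ℝ)) ^ (-(k : ℝ)) *
        (|b ^ (1 / 4 : ℝ) * u| ^ k * Real.exp (-(b ^ (1 / 4 : ℝ) * u) ^ 4)) := by
  have ha : 0 < b ^ (1 / 4 : ℝ) := by positivity
  have h4 : (b ^ (1 / 4 : ℝ)) ^ 4 = b := by
    rw [← Real.rpow_natCast, ← Real.rpow_mul hb.le]
    norm_num
  rw [abs_mul, abs_of_pos ha, mul_pow, mul_pow, h4, Real.rpow_neg ha.le, Real.rpow_natCast]
  field_simp

lemma quartic_integrable (k : ℕ) {b : ℝ} (hb : 0 < b) :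
    Integrable fun u : ℝ => |u| ^ k * Real.exp (-b * u ^ 4) := by
  simp_rw [quartic_scale k hb]
  refine Integrable.const_mul ?_ _
  exact (integrable_comp_mul_left_iff (fun u : ℝ => |u| ^ k * Real.exp (-u ^ 4))
    (by positivity)).2 (quartic_integrable_one k)

lemma quartic_integral (k : ℕ) {b : ℝ} (hb : 0 < b) :
    ∫ u : ℝ, |u| ^ k * Real.exp (-b * u ^ 4) = Jm k * b ^ (-((k : ℝ) + 1) / 4) := by
  have ha : 0 < b ^ (1 / 4 : ℝ) := by positivity
  simp_rw [quartic_scale k hb]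
  rw [integral_const_mul, Measure.integral_comp_mul_left (fun u : ℝ => |u| ^ k * Real.exp (-u ^ 4)),
    abs_of_pos (by positivity), smul_eq_mul, ← Jm, ← Real.rpow_neg_one, ← mul_assoc,
    ← Real.rpow_add ha, ← Real.rpow_mul hb.le, mul_comm]
  congr 2
  ring

/-- The majorant `∏ |q_i|^{k_i} e^{-b_i q_i⁴}` with `b₂ = b₃`. -/
noncomputable def maj (k₁ k₂ k₃ : ℕ) (b₁ b₂ : ℝ) (q : ℝ × ℝ × ℝ) : ℝ :=
  (|q.1| ^ k₁ * Real.exp (-b₁ * q.1 ^ 4)) *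
    ((|q.2.1| ^ k₂ * Real.exp (-b₂ * q.2.1 ^ 4)) * (|q.2.2| ^ k₃ * Real.exp (-b₂ * q.2.2 ^ 4)))

lemma maj_nonneg (k₁ k₂ k₃ : ℕ) (b₁ b₂ : ℝ) (q : ℝ × ℝ × ℝ) : 0 ≤ maj k₁ k₂ k₃ b₁ b₂ q := by
  unfold maj; positivity

lemma maj_sq (k₁ k₂ k₃ : ℕ) (b₁ b₂ : ℝ) (q : ℝ × ℝ × ℝ) :
    maj k₁ k₂ k₃ b₁ b₂ q ^ 2 = maj (2 * k₁) (2 * k₂) (2 * k₃) (2 * b₁) (2 * b₂) q := by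
  have h : ∀ (k : ℕ) (b u : ℝ), (|u| ^ k * Real.exp (-b * u ^ 4)) ^ 2 =
      |u| ^ (2 * k) * Real.exp (-(2 * b) * u ^ 4) := by
    intro k b u
    rw [mul_pow, ← pow_mul, mul_comm k, ← Real.exp_nat_mul]
    congr 2
    push_cast
    ring
  unfold maj
  rw [mul_pow _ (_ * _ * _) 2, mul_pow (_ * Real.exp (-b₂ * q.2.1 ^ 4)) _ 2, h, h, h]

lemma maj_integrable (k₁ k₂ k₃ : ℕ) {b₁ b₂ : ℝ} (h₁ : 0 < b₁) (h₂ : 0 < b₂) :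
    Integrable (maj k₁ k₂ k₃ b₁ b₂) :=
  (quartic_integrable k₁ h₁).mul_prod
    ((quartic_integrable k₂ h₂).mul_prod (quartic_integrable k₃ h₂))

lemma maj_integral (k₁ k₂ k₃ : ℕ) {c t w : ℝ} (hc : 0 < c) (ht : 0 < t) (hw : 0 < w) :
    ∫ q, maj k₁ k₂ k₃ (c * t * w) (c * t) q =
      (Jm k₁ * Jm k₂ * Jm k₃ * c ^ (-((k₁ : ℝ) + k₂ + k₃ + 3) / 4)) *
        (t ^ (-((k₁ : ℝ) + k₂ + k₃ + 3) / 4) * w ^ (-((k₁ : ℝ) + 1) / 4)) := by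
  have hct : 0 < c * t := by positivity
  unfold maj
  erw [integral_prod_mul (μ := (volume : Measure ℝ)) (ν := (volume : Measure (ℝ × ℝ)))
    (fun u : ℝ => |u| ^ k₁ * Real.exp (-(c * t * w) * u ^ 4))
    (fun x : ℝ × ℝ => (|x.1| ^ k₂ * Real.exp (-(c * t) * x.1 ^ 4)) *
      (|x.2| ^ k₃ * Real.exp (-(c * t) * x.2 ^ 4))),
    integral_prod_mul (μ := (volume : Measure ℝ)) (ν := (volume : Measure ℝ))
      (fun u : ℝ => |u| ^ k₂ * Real.exp (-(c * t) * u ^ 4))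
      (fun u : ℝ => |u| ^ k₃ * Real.exp (-(c * t) * u ^ 4))]
  rw [quartic_integral k₁ (by positivity), quartic_integral k₂ hct, quartic_integral k₃ hct,
    Real.mul_rpow hct.le hw.le]
  have e : (c * t) ^ (-((k₁ : ℝ) + 1) / 4) * (c * t) ^ (-((k₂ : ℝ) + 1) / 4) *
      (c * t) ^ (-((k₃ : ℝ) + 1) / 4) = c ^ (-((k₁ : ℝ) + k₂ + k₃ + 3) / 4) *
        t ^ (-((k₁ : ℝ) + k₂ + k₃ + 3) / 4) := by
    rw [← Real.rpow_add hct, ← Real.rpow_add hct, ← Real.mul_rpow hc.le ht.le]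
    congr 1
    ring
  linear_combination Jm k₁ * Jm k₂ * Jm k₃ * w ^ (-((k₁ : ℝ) + 1) / 4) * e

/-! ### Interpolation between `L²` and `L^∞` -/

/-- With `D` and `B` tracked separately, `L^p` interpolation is `B ↦ B^{1-1/p}`; the condition `1 ≤ C`
absorbs the power `C^{1-1/p}` into `C`. -/
lemma interp {α : Type*} [MeasurableSpace α] {μ : Measure α} {f : α → ℂ} {C D B : ℝ}
    (hC : 1 ≤ C) (hD : 0 < D) (hB : 0 < B) (hsup : ∀ x, ‖f x‖ ≤ C * D * B)
    (hL2 : ∫⁻ x, ‖f x‖ₑ ^ 2 ∂μ ≤ ENNReal.ofReal (C * D ^ 2 * B)) {p : ℝ≥0∞} (hp : 2 ≤ p) :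
    eLpNorm f p μ ≤ ENNReal.ofReal (C * D * B ^ (1 - p⁻¹.toReal)) := by
  have hC0 : 0 < C := by linarith
  rcases eq_or_ne p ⊤ with rfl | hpt
  · rw [eLpNorm_exponent_top]
    simpa using eLpNormEssSup_le_of_ae_bound (Filter.Eventually.of_forall hsup)
  have hp0 : p ≠ 0 := by
    rintro rfl
    simp at hp
  set r := p.toReal with hr
  have hr2 : 2 ≤ r := by
    have := ENNReal.toReal_mono hpt hp
    simpa using this
  have hr0 : 0 < r := by linarith
  rw [eLpNorm_eq_lintegral_rpow_enorm_toReal hp0 hpt, ← hr, one_div, ENNReal.rpow_inv_le_iff hr0,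
    ENNReal.ofReal_rpow_of_pos (by positivity), ENNReal.toReal_inv, ← hr]
  calc ∫⁻ x, ‖f x‖ₑ ^ r ∂μ
      ≤ ∫⁻ x, ENNReal.ofReal ((C * D * B) ^ (r - 2)) * ‖f x‖ₑ ^ 2 ∂μ := by
        refine lintegral_mono fun x => ?_
        have e : ‖f x‖ₑ ^ r = ‖f x‖ₑ ^ (r - 2) * ‖f x‖ₑ ^ 2 := by
          rw [← ENNReal.rpow_two, ← ENNReal.rpow_add_of_nonneg _ _ (by linarith) (by norm_num)]
          congr 1
          ring
        rw [e]
        gcongr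
        rw [← ENNReal.ofReal_rpow_of_pos (by positivity)]
        refine ENNReal.rpow_le_rpow ?_ (by linarith)
        rw [← ofReal_norm]
        exact ENNReal.ofReal_le_ofReal (hsup x)
    _ = ENNReal.ofReal ((C * D * B) ^ (r - 2)) * ∫⁻ x, ‖f x‖ₑ ^ 2 ∂μ :=
        lintegral_const_mul' _ _ ENNReal.ofReal_ne_top
    _ ≤ ENNReal.ofReal ((C * D * B) ^ (r - 2)) * ENNReal.ofReal (C * D ^ 2 * B) := by
        gcongr
    _ = ENNReal.ofReal ((C * D * B) ^ (r - 2) * (C * D ^ 2 * B)) := by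
        rw [← ENNReal.ofReal_mul (by positivity)]
    _ ≤ ENNReal.ofReal ((C * D * B ^ (1 - r⁻¹)) ^ r) := by
        refine ENNReal.ofReal_le_ofReal ?_
        have e1 : (C * D * B ^ (1 - r⁻¹)) ^ r = C ^ r * (D ^ r * B ^ (r - 1)) := by
          rw [Real.mul_rpow (by positivity) (by positivity), Real.mul_rpow hC0.le hD.le,
            ← Real.rpow_mul hB.le, mul_assoc]
          congr 3
          field_simp
        have e2 : (C * D * B) ^ (r - 2) * (C * D ^ 2 * B) =
            C ^ (r - 1) * (D ^ r * B ^ (r - 1)) := by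
          rw [Real.mul_rpow (by positivity) hB.le, Real.mul_rpow hC0.le hD.le]
          rw [show C ^ (r - 1) = C ^ (r - 2) * C by
              rw [← Real.rpow_add_one hC0.ne']; congr 1; ring,
            show B ^ (r - 1) = B ^ (r - 2) * B by
              rw [← Real.rpow_add_one hB.ne']; congr 1; ring,
            show D ^ r = D ^ (r - 2) * D ^ 2 by
              rw [← Real.rpow_two, ← Real.rpow_add hD]; congr 1; ring]
          ring
        rw [e1, e2]
        refine mul_le_mul_of_nonneg_right ?_ (by positivity)
        exact Real.rpow_le_rpow_of_exponent_le hC (by linarith)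

/-! ### The spectral Green's function -/

lemma Ghat2_cont (A κ t : ℝ) :
    Continuous fun q : ℝ × ℝ × ℝ => Ghat2 A κ t q.1 q.2.1 q.2.2 := by
  unfold Ghat2
  refine Real.continuous_exp.comp ?_
  refine intervalIntegral.continuous_parametric_intervalIntegral_of_continuous' ?_ 0 t
  unfold vA
  fun_prop

/-- The symbol `κ + 4v² - v` exceeds `ε` by a multiple of `v²`, because `κ - ε > 1/16`; and
`∫₀ᵗ (η + Aξs)⁴ ds` controls `t (η⁴ + (Aξt)⁴)`. -/
lemma Ghat2_le (A κ ε : ℝ) (hκ : 1 / 16 + ε < κ) :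
    ∃ c : ℝ, 0 < c ∧ ∀ t : ℝ, 0 < t → ∀ ξ η ζ : ℝ,
      Ghat2 A κ t ξ η ζ ≤ Real.exp (-ε * t) *
        (Real.exp (-(c * t * (1 + (A * t) ^ 4)) * ξ ^ 4) *
          (Real.exp (-(c * t) * η ^ 4) * Real.exp (-(c * t) * ζ ^ 4))) := by
  obtain ⟨l, hl⟩ : ∃ l, l = κ - ε := ⟨_, rfl⟩
  have hl16 : 1 / 16 < l := by linarith
  have hl0 : 0 < l := by linarith
  obtain ⟨c, hc⟩ : ∃ c, c = 4 - 1 / (4 * l) := ⟨_, rfl⟩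
  have hc0 : 0 < c := by
    rw [hc, sub_pos, div_lt_iff₀ (by positivity)]
    linarith
  have hv : ∀ v : ℝ, v - κ - 4 * v ^ 2 ≤ -ε - c * v ^ 2 := by
    intro v
    have h1 : v ≤ l + v ^ 2 * (1 / (4 * l)) := by
      rw [mul_one_div, ← sub_le_iff_le_add', le_div_iff₀ (by positivity)]
      nlinarith [sq_nonneg (v - 2 * l)]
    rw [hc]
    linarith
  refine ⟨c / 120, by positivity, fun t ht ξ η ζ => ?_⟩
  obtain ⟨b, hb⟩ : ∃ b, b = A * ξ := ⟨_, rfl⟩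
  obtain ⟨m, hm⟩ : ∃ m, m = b * t := ⟨_, rfl⟩
  have hint : ∫ s in (0:ℝ)..t, (-ε - c * (ξ ^ 4 + ζ ^ 4 + (η + b * s) ^ 4)) =
      -ε * t - c * (t * (ξ ^ 4 + ζ ^ 4 +
        (η ^ 4 + 2 * η ^ 3 * m + 2 * η ^ 2 * m ^ 2 + η * m ^ 3 + m ^ 4 / 5))) := by
    have hd : ∀ s ∈ Set.uIcc 0 t, HasDerivAt (fun s : ℝ => -ε * s - c * ((ξ ^ 4 + ζ ^ 4) * s +
        (η ^ 4 * s + 2 * η ^ 3 * b * s ^ 2 + 2 * η ^ 2 * b ^ 2 * s ^ 3 + η * b ^ 3 * s ^ 4 +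
          b ^ 4 / 5 * s ^ 5))) (-ε - c * (ξ ^ 4 + ζ ^ 4 + (η + b * s) ^ 4)) s := by
      intro s _
      have hp : ∀ n : ℕ, HasDerivAt (fun s : ℝ => s ^ n) (n * s ^ (n - 1)) s :=
        fun n => hasDerivAt_pow n s
      have hi : HasDerivAt (fun s : ℝ => s) 1 s := hasDerivAt_id s
      have := (hi.const_mul (-ε)).sub (((hi.const_mul (ξ ^ 4 + ζ ^ 4)).add
        (((((hi.const_mul (η ^ 4)).add ((hp 2).const_mul (2 * η ^ 3 * b))).add
          ((hp 3).const_mul (2 * η ^ 2 * b ^ 2))).add ((hp 4).const_mul (η * b ^ 3))).add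
            ((hp 5).const_mul (b ^ 4 / 5)))).const_mul c)
      refine this.congr_deriv ?_
      push_cast
      ring
    rw [intervalIntegral.integral_eq_sub_of_hasDerivAt hd
      (Continuous.intervalIntegrable (by fun_prop) _ _), hm]
    ring
  have hle : ∫ s in (0:ℝ)..t, (vA A ξ η ζ s - κ - 4 * vA A ξ η ζ s ^ 2) ≤
      ∫ s in (0:ℝ)..t, (-ε - c * (ξ ^ 4 + ζ ^ 4 + (η + b * s) ^ 4)) := by
    refine intervalIntegral.integral_mono_on ht.le
      (Continuous.intervalIntegrable (by unfold vA; fun_prop) _ _)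
      (Continuous.intervalIntegrable (by fun_prop) _ _) fun s _ => ?_
    refine (hv _).trans ?_
    have : ξ ^ 4 + ζ ^ 4 + (η + b * s) ^ 4 ≤ vA A ξ η ζ s ^ 2 := by
      rw [vA, ← hb]
      nlinarith [mul_nonneg (sq_nonneg ξ) (sq_nonneg (η + b * s)),
        mul_nonneg (sq_nonneg ξ) (sq_nonneg ζ), mul_nonneg (sq_nonneg ζ) (sq_nonneg (η + b * s))]
    nlinarith
  -- In the variable `n = η + m/2` the mean of `(η + m u)⁴` over `u ∈ [0,1]` has only even terms.
  have hq : (η ^ 4 + m ^ 4) / 120 ≤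
      η ^ 4 + 2 * η ^ 3 * m + 2 * η ^ 2 * m ^ 2 + η * m ^ 3 + m ^ 4 / 5 := by
    obtain ⟨n, hn⟩ : ∃ n, n = η + m / 2 := ⟨_, rfl⟩
    have e : η = n - m / 2 := by linarith
    have h8 : (n - m / 2) ^ 4 ≤ 8 * (n ^ 4 + m ^ 4 / 16) := by
      nlinarith [sq_nonneg (n ^ 2 - m ^ 2 / 4), sq_nonneg (n + m / 2),
        sq_nonneg ((n + m / 2) ^ 2), sq_nonneg ((n + m / 2) * (n - m / 2)),
        sq_nonneg ((n - m / 2) ^ 2), sq_nonneg (n * (n + m / 2)), sq_nonneg (m * (n + m / 2))]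
    have e2 : η ^ 4 + 2 * η ^ 3 * m + 2 * η ^ 2 * m ^ 2 + η * m ^ 3 + m ^ 4 / 5 =
        n ^ 4 + n ^ 2 * m ^ 2 / 2 + m ^ 4 / 80 := by
      rw [e]; ring
    rw [e2, e]
    nlinarith [sq_nonneg (n * m), sq_nonneg (n ^ 2)]
  have hm4 : m ^ 4 = (A * t) ^ 4 * ξ ^ 4 := by rw [hm, hb]; ring
  unfold Ghat2
  rw [← Real.exp_add, ← Real.exp_add, ← Real.exp_add]
  refine Real.exp_le_exp.2 (hle.trans ?_)
  rw [hint]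
  have h2 : 1 / 120 * (ξ ^ 4 + ζ ^ 4 + η ^ 4 + m ^ 4) ≤ ξ ^ 4 + ζ ^ 4 +
      (η ^ 4 + 2 * η ^ 3 * m + 2 * η ^ 2 * m ^ 2 + η * m ^ 3 + m ^ 4 / 5) := by
    have : 0 ≤ ξ ^ 4 + ζ ^ 4 := by positivity
    linarith
  have h3 := mul_le_mul_of_nonneg_left h2 (mul_nonneg hc0.le ht.le)
  rw [hm4] at h3 ⊢
  linarith

/-- The decay factor `e^{-εt} t^{-k/4} (1+(At)⁴)^{-k₁/4}` contributed by the derivatives. -/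
noncomputable def Dfac (A ε : ℝ) (k₁ k₂ k₃ : ℕ) (t : ℝ) : ℝ :=
  Real.exp (-ε * t) * t ^ (-((k₁ : ℝ) + k₂ + k₃) / 4) * (1 + (A * t) ^ 4) ^ (-(k₁ : ℝ) / 4)

/-- The volume factor `t^{-3/4} (1+(At)⁴)^{-1/4}`. -/
noncomputable def Bfac (A t : ℝ) : ℝ := t ^ (-(3 : ℝ) / 4) * (1 + (A * t) ^ 4) ^ (-(1 : ℝ) / 4)

lemma one_add_pos (A t : ℝ) : 0 < 1 + (A * t) ^ 4 := by positivity

lemma Dfac_pos (A ε : ℝ) (k₁ k₂ k₃ : ℕ) {t : ℝ} (ht : 0 < t) : 0 < Dfac A ε k₁ k₂ k₃ t := by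
  have := one_add_pos A t
  unfold Dfac; positivity

lemma Bfac_pos (A : ℝ) {t : ℝ} (ht : 0 < t) : 0 < Bfac A t := by
  have := one_add_pos A t
  unfold Bfac; positivity

/-- `L¹` and `L²` bounds for anything dominated by `|ξ|^{k₁}|η|^{k₂}|ζ|^{k₃} Ĝ₂`. -/
lemma core (A κ ε : ℝ) (hκ : 1 / 16 + ε < κ) (k₁ k₂ k₃ : ℕ) :
    ∃ C : ℝ, 1 ≤ C ∧ ∀ t : ℝ, 0 < t → ∀ F : ℝ × ℝ × ℝ → ℂ, Continuous F →
      (∀ q, ‖F q‖ ≤ ‖mon k₁ k₂ k₃ q‖ * Ghat2 A κ t q.1 q.2.1 q.2.2) →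
      Integrable F ∧ ∫ q, ‖F q‖ ≤ C * Dfac A ε k₁ k₂ k₃ t * Bfac A t ∧
      ENNReal.ofReal ((2 * Real.pi) ^ 3) * ∫⁻ q, ‖F q‖ₑ ^ 2 ≤
        ENNReal.ofReal (C * Dfac A ε k₁ k₂ k₃ t ^ 2 * Bfac A t) := by
  obtain ⟨c, hc, hG⟩ := Ghat2_le A κ ε hκ
  set C₁ := Jm k₁ * Jm k₂ * Jm k₃ * c ^ (-((k₁ : ℝ) + k₂ + k₃ + 3) / 4) with hC₁
  set C₂ := Jm (2 * k₁) * Jm (2 * k₂) * Jm (2 * k₃) *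
    (2 * c) ^ (-(((2 * k₁ : ℕ) : ℝ) + (2 * k₂ : ℕ) + (2 * k₃ : ℕ) + 3) / 4) with hC₂
  have hC₁0 : 0 ≤ C₁ := by
    have := Jm_nonneg k₁; have := Jm_nonneg k₂; have := Jm_nonneg k₃
    positivity
  have hC₂0 : 0 ≤ C₂ := by
    have := Jm_nonneg (2 * k₁); have := Jm_nonneg (2 * k₂); have := Jm_nonneg (2 * k₃)
    positivity
  have hpi : 0 ≤ (2 * Real.pi) ^ 3 := by positivity
  refine ⟨1 + C₁ + (2 * Real.pi) ^ 3 * C₂, by nlinarith [mul_nonneg hpi hC₂0], ?_⟩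
  intro t ht F hFc hF
  set w := 1 + (A * t) ^ 4 with hw
  have hw0 : 0 < w := one_add_pos A t
  have hD := Dfac_pos A ε k₁ k₂ k₃ ht
  have hB := Bfac_pos A ht
  have hdom : ∀ q, ‖F q‖ ≤ Real.exp (-ε * t) * maj k₁ k₂ k₃ (c * t * w) (c * t) q := by
    intro q
    refine (hF q).trans ?_
    refine (mul_le_mul_of_nonneg_left (hG t ht q.1 q.2.1 q.2.2) (norm_nonneg _)).trans_eq ?_
    rw [mon_norm, maj]
    ring
  have hmi := maj_integrable k₁ k₂ k₃ (b₁ := c * t * w) (b₂ := c * t) (by positivity)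
    (by positivity)
  have hFi : Integrable F := (hmi.const_mul _).mono' hFc.aestronglyMeasurable
    (Filter.Eventually.of_forall hdom)
  refine ⟨hFi, ?_, ?_⟩
  · calc ∫ q, ‖F q‖ ≤ ∫ q, Real.exp (-ε * t) * maj k₁ k₂ k₃ (c * t * w) (c * t) q :=
          integral_mono hFi.norm (hmi.const_mul _) hdom
      _ = C₁ * (Dfac A ε k₁ k₂ k₃ t * Bfac A t) := by
          rw [integral_const_mul, maj_integral k₁ k₂ k₃ hc ht hw0, ← hC₁, Dfac, Bfac, ← hw]
          rw [show -((k₁ : ℝ) + k₂ + k₃ + 3) / 4 = -((k₁ : ℝ) + k₂ + k₃) / 4 + -(3 : ℝ) / 4 by ring,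
            show -((k₁ : ℝ) + 1) / 4 = -(k₁ : ℝ) / 4 + -(1 : ℝ) / 4 by ring,
            Real.rpow_add ht, Real.rpow_add hw0]
          ring
      _ ≤ _ := by
          nlinarith [mul_nonneg (mul_nonneg hpi hC₂0) (mul_pos hD hB).le, mul_pos hD hB]
  · have hm2 := maj_integrable (2 * k₁) (2 * k₂) (2 * k₃) (b₁ := 2 * c * t * w) (b₂ := 2 * c * t)
      (by positivity) (by positivity)
    have h1 : ∫⁻ q, ‖F q‖ₑ ^ 2 ≤ ENNReal.ofReal (C₂ * Dfac A ε k₁ k₂ k₃ t ^ 2 * Bfac A t) := by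
      calc ∫⁻ q, ‖F q‖ₑ ^ 2 ≤ ∫⁻ q, ENNReal.ofReal (Real.exp (-ε * t) ^ 2 *
            maj (2 * k₁) (2 * k₂) (2 * k₃) (2 * c * t * w) (2 * c * t) q) := by
            refine lintegral_mono fun q => ?_
            rw [← ofReal_norm, ← ENNReal.ofReal_pow (norm_nonneg _)]
            refine ENNReal.ofReal_le_ofReal ?_
            have := maj_sq k₁ k₂ k₃ (c * t * w) (c * t) q
            rw [show 2 * c * t * w = 2 * (c * t * w) by ring,
              show 2 * c * t = 2 * (c * t) by ring, ← this, ← mul_pow]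
            exact pow_le_pow_left₀ (norm_nonneg _) (hdom q) 2
        _ = ENNReal.ofReal (∫ q, Real.exp (-ε * t) ^ 2 *
            maj (2 * k₁) (2 * k₂) (2 * k₃) (2 * c * t * w) (2 * c * t) q) :=
            (ofReal_integral_eq_lintegral_ofReal (hm2.const_mul _)
              (Filter.Eventually.of_forall fun q =>
                mul_nonneg (by positivity) (maj_nonneg _ _ _ _ _ q))).symm
        _ = _ := by
            congr 1
            rw [integral_const_mul, maj_integral (2 * k₁) (2 * k₂) (2 * k₃) (by positivity) ht hw0,
              ← hC₂, Dfac, Bfac, ← hw]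
            rw [show -(((2 * k₁ : ℕ) : ℝ) + (2 * k₂ : ℕ) + (2 * k₃ : ℕ) + 3) / 4 =
                -((k₁ : ℝ) + k₂ + k₃) / 4 + -((k₁ : ℝ) + k₂ + k₃) / 4 + -(3 : ℝ) / 4 by
                push_cast; ring,
              show -(((2 * k₁ : ℕ) : ℝ) + 1) / 4 = -(k₁ : ℝ) / 4 + -(k₁ : ℝ) / 4 + -(1 : ℝ) / 4 by
                push_cast; ring,
              Real.rpow_add ht, Real.rpow_add hw0, Real.rpow_add ht, Real.rpow_add hw0]
            ring
    refine (mul_le_mul_right h1 _).trans ?_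
    rw [← ENNReal.ofReal_mul hpi]
    refine ENNReal.ofReal_le_ofReal ?_
    have h0 : 0 ≤ Dfac A ε k₁ k₂ k₃ t ^ 2 * Bfac A t := by positivity
    nlinarith [mul_nonneg hC₁0 h0]

/-! ### The two Green's function estimates -/

/-- The amplitude of `GreenG` as a Fourier integral in the unprimed variables. -/
noncomputable def amp (A κ t : ℝ) (q' q : ℝ × ℝ × ℝ) : ℂ :=
  Complex.exp (-Complex.I *
    ((q'.1 * q.1 + q'.2.1 * (q.2.1 + A * q.1 * t) + q'.2.2 * q.2.2 : ℝ) : ℂ)) *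
      (Ghat2 A κ t q.1 q.2.1 q.2.2 : ℂ)

lemma amp_cont (A κ t : ℝ) (q' : ℝ × ℝ × ℝ) : Continuous (amp A κ t q') := by
  unfold amp
  refine Continuous.mul (by fun_prop) (Complex.continuous_ofReal.comp (Ghat2_cont A κ t))

lemma phase_norm (x : ℝ) : ‖Complex.exp (-Complex.I * (x : ℂ))‖ = 1 := by
  have : -Complex.I * (x : ℂ) = ((-x : ℝ) : ℂ) * Complex.I := by push_cast; ring
  rw [this, Complex.norm_exp_ofReal_mul_I]

lemma Ghat2_pos (A κ t ξ η ζ : ℝ) : 0 < Ghat2 A κ t ξ η ζ := Real.exp_pos _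

lemma amp_norm (A κ t : ℝ) (q' q : ℝ × ℝ × ℝ) :
    ‖amp A κ t q' q‖ = Ghat2 A κ t q.1 q.2.1 q.2.2 := by
  rw [amp, norm_mul, phase_norm, one_mul, Complex.norm_real,
    Real.norm_of_nonneg (Ghat2_pos _ _ _ _ _ _).le]

lemma GreenG_eq (A κ t x' y' z' : ℝ) :
    (fun p : ℝ × ℝ × ℝ => GreenG A κ t p.1 p.2.1 p.2.2 x' y' z') =
      TF (amp A κ t (x', y', z')) := by
  ext p
  unfold GreenG TF amp chi
  congr 1; ext q
  rw [mul_assoc]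

lemma pD_GreenG (A κ ε : ℝ) (hκ : 1 / 16 + ε < κ) (k₁ k₂ k₃ : ℕ)
    {t : ℝ} (ht : 0 < t) (x' y' z' : ℝ) :
    pD k₁ k₂ k₃ (fun p : ℝ × ℝ × ℝ => GreenG A κ t p.1 p.2.1 p.2.2 x' y' z') =
      TF fun q => mon k₁ k₂ k₃ q * amp A κ t (x', y', z') q := by
  rw [GreenG_eq]
  refine pD_TF (fun a b c => ?_) k₁ k₂ k₃
  obtain ⟨C, -, h⟩ := core A κ ε hκ a b c
  exact (h t ht (fun q => mon a b c q * amp A κ t (x', y', z') q)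
    ((mon_cont a b c).mul (amp_cont _ _ _ _)) fun q => by
    rw [norm_mul, amp_norm]).1

/-- The reflected shear `(ξ, η, ζ) ↦ (-ξ, Atξ - η, -ζ)`; it turns the phase
`-(x'ξ + y'(η + Aξt) + z'ζ)` into `x'ξ + y'η + z'ζ`. -/
def shear (a : ℝ) (r : ℝ × ℝ × ℝ) : ℝ × ℝ × ℝ := (-r.1, (a * r.1 - r.2.1, -r.2.2))

lemma shear_cont (a : ℝ) : Continuous (shear a) := by
  unfold shear
  fun_prop

lemma shear_mp (a : ℝ) : MeasurePreserving (shear a) volume volume := by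
  refine MeasurePreserving.skew_product (μa := (volume : Measure ℝ)) (μb := (volume : Measure ℝ))
    (μc := (volume : Measure (ℝ × ℝ))) (μd := (volume : Measure (ℝ × ℝ)))
    (f := fun x : ℝ => -x) (g := fun (x : ℝ) (y : ℝ × ℝ) => (a * x - y.1, -y.2))
    (Measure.measurePreserving_neg _) (by fun_prop) (Filter.Eventually.of_forall fun x => ?_)
  exact ((Measure.measurePreserving_sub_left (volume : Measure ℝ) (a * x)).prod
    (Measure.measurePreserving_neg (volume : Measure ℝ))).map_eq

lemma TF_primed (A κ t : ℝ) (k₁ k₂ k₃ : ℕ) (p q' : ℝ × ℝ × ℝ) :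
    TF (fun q => mon k₁ k₂ k₃ q * amp A κ t q' q) p =
      TF (fun r => (fun q : ℝ × ℝ × ℝ => chi p q * (mon k₁ k₂ k₃ q *
        (Ghat2 A κ t q.1 q.2.1 q.2.2 : ℂ))) (shear (A * t) r)) q' := by
  unfold TF
  have hc : Continuous fun q => chi p q * (mon k₁ k₂ k₃ q * amp A κ t q' q) :=
    (chi_cont_right p).mul ((mon_cont _ _ _).mul (amp_cont _ _ _ _))
  have h := integral_map (μ := volume) (shear_mp (A * t)).measurable.aemeasurable
    (f := fun q => chi p q * (mon k₁ k₂ k₃ q * amp A κ t q' q)) hc.aestronglyMeasurable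
  rw [(shear_mp (A * t)).map_eq] at h
  rw [h]
  congr 1; ext r
  have e : Complex.exp (-Complex.I * ((q'.1 * (shear (A * t) r).1 + q'.2.1 *
      ((shear (A * t) r).2.1 + A * (shear (A * t) r).1 * t) +
      q'.2.2 * (shear (A * t) r).2.2 : ℝ) : ℂ)) = chi q' r := by
    unfold chi shear
    congr 1
    push_cast
    ring
  simp only [amp]
  rw [e]
  ring

/-- For nonnegative integers `k₁, k₂, k₃` with `k = k₁ + k₂ + k₃` and every
`2 ≤ p ≤ ∞` there is `C > 0` such that for all `t > 0`, uniformly in the fixed point,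
the `L^p` norms (in the unprimed, resp. primed, variables) of
`∂_x^{k₁} ∂_y^{k₂} ∂_z^{k₃} G` are bounded by
`C e^{-ε t} t^{-(3/4)(1 - 1/p) - k/4} (1 + (A t)⁴)^{-(1/4)(1 - 1/p) - k₁/4}`. -/
theorem stmt_7 (A κ ε : ℝ) (hA : 0 < A) (hκ0 : 0 < κ) (hε : 0 < ε)
    (hκ : 1 / 16 + ε < κ) (k₁ k₂ k₃ : ℕ) :
    ∀ p : ℝ≥0∞, 2 ≤ p → ∃ C : ℝ, 0 < C ∧ ∀ t : ℝ, 0 < t →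
      (∀ x' y' z' : ℝ,
        eLpNorm (fun q : ℝ × ℝ × ℝ =>
            pD k₁ k₂ k₃
              (fun p' : ℝ × ℝ × ℝ => GreenG A κ t p'.1 p'.2.1 p'.2.2 x' y' z') q)
          p volume ≤
          ENNReal.ofReal (C * Real.exp (-ε * t) *
            t ^ (-(3:ℝ)/4 * (1 - p⁻¹.toReal) - (k₁ + k₂ + k₃ : ℝ)/4) *
            (1 + (A * t) ^ 4) ^ (-(1:ℝ)/4 * (1 - p⁻¹.toReal) - (k₁ : ℝ)/4))) ∧
      (∀ x y z : ℝ,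
        eLpNorm (fun q : ℝ × ℝ × ℝ =>
            pD k₁ k₂ k₃
              (fun p' : ℝ × ℝ × ℝ => GreenG A κ t p'.1 p'.2.1 p'.2.2 q.1 q.2.1 q.2.2)
              (x, y, z))
          p volume ≤
          ENNReal.ofReal (C * Real.exp (-ε * t) *
            t ^ (-(3:ℝ)/4 * (1 - p⁻¹.toReal) - (k₁ + k₂ + k₃ : ℝ)/4) *
            (1 + (A * t) ^ 4) ^ (-(1:ℝ)/4 * (1 - p⁻¹.toReal) - (k₁ : ℝ)/4))) := by
  intro p hp
  obtain ⟨C, hC, hcore⟩ := core A κ ε hκ k₁ k₂ k₃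
  refine ⟨C, by linarith, fun t ht => ?_⟩
  have hD := Dfac_pos A ε k₁ k₂ k₃ ht
  have hB := Bfac_pos A ht
  have hw0 := one_add_pos A t
  have hrhs : C * Real.exp (-ε * t) *
      t ^ (-(3:ℝ)/4 * (1 - p⁻¹.toReal) - (k₁ + k₂ + k₃ : ℝ)/4) *
      (1 + (A * t) ^ 4) ^ (-(1:ℝ)/4 * (1 - p⁻¹.toReal) - (k₁ : ℝ)/4) =
      C * Dfac A ε k₁ k₂ k₃ t * Bfac A t ^ (1 - p⁻¹.toReal) := by
    rw [Bfac, Dfac, Real.mul_rpow (by positivity) (by positivity), ← Real.rpow_mul ht.le,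
      ← Real.rpow_mul hw0.le,
      show -(3:ℝ)/4 * (1 - p⁻¹.toReal) - (k₁ + k₂ + k₃ : ℝ)/4 =
        -((k₁ : ℝ) + k₂ + k₃) / 4 + -(3:ℝ)/4 * (1 - p⁻¹.toReal) by ring,
      show -(1:ℝ)/4 * (1 - p⁻¹.toReal) - (k₁ : ℝ)/4 =
        -(k₁ : ℝ) / 4 + -(1:ℝ)/4 * (1 - p⁻¹.toReal) by ring,
      Real.rpow_add ht, Real.rpow_add hw0]
    ring
  rw [hrhs]
  refine ⟨fun x' y' z' => ?_, fun x y z => ?_⟩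
  · obtain ⟨hi, h1, h2⟩ := hcore t ht
      (fun q => mon k₁ k₂ k₃ q * amp A κ t (x', y', z') q)
      ((mon_cont _ _ _).mul (amp_cont _ _ _ _)) (fun q => by rw [norm_mul, amp_norm])
    rw [pD_GreenG A κ ε hκ k₁ k₂ k₃ ht]
    exact interp hC hD hB (fun q => (TF_norm_le _ q).trans h1) ((plancherel_le hi).trans h2) hp
  · set H : ℝ × ℝ × ℝ → ℂ := fun q => chi (x, y, z) q * (mon k₁ k₂ k₃ q *
      (Ghat2 A κ t q.1 q.2.1 q.2.2 : ℂ)) with hH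
    have hHc : Continuous H := (chi_cont_right _).mul
      ((mon_cont _ _ _).mul (Complex.continuous_ofReal.comp (Ghat2_cont A κ t)))
    obtain ⟨hi, h1, h2⟩ := hcore t ht H hHc (fun q => by
      rw [hH, norm_mul, chi_norm, one_mul, norm_mul, Complex.norm_real,
        Real.norm_of_nonneg (Ghat2_pos _ _ _ _ _ _).le])
    have hmp := shear_mp (A * t)
    have hi2 : Integrable fun r => H (shear (A * t) r) := hmp.integrable_comp_of_integrable hi
    have e1 : ∫ r, ‖H (shear (A * t) r)‖ = ∫ q, ‖H q‖ := by
      have h := integral_map (μ := volume) hmp.measurable.aemeasurable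
        (f := fun q => ‖H q‖) hHc.norm.aestronglyMeasurable
      rw [hmp.map_eq] at h
      exact h.symm
    have e2 : ∫⁻ r, ‖H (shear (A * t) r)‖ₑ ^ 2 = ∫⁻ q, ‖H q‖ₑ ^ 2 :=
      hmp.lintegral_comp (f := fun q => ‖H q‖ₑ ^ 2) (hHc.measurable.enorm.pow_const 2)
    have hf : (fun q : ℝ × ℝ × ℝ => pD k₁ k₂ k₃
        (fun p : ℝ × ℝ × ℝ => GreenG A κ t p.1 p.2.1 p.2.2 q.1 q.2.1 q.2.2) (x, y, z)) =
        TF fun r => H (shear (A * t) r) := by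
      ext q
      rw [pD_GreenG A κ ε hκ k₁ k₂ k₃ ht, TF_primed]
    rw [hf]
    refine interp hC hD hB (fun q => (TF_norm_le _ q).trans (e1.trans_le h1)) ?_ hp
    exact (plancherel_le hi2).trans (e2 ▸ h2)
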